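/- arXiv:2406.05753 — 3 statements merged into one kernel-verified Lean document; each statement's English description precedes it below -/
import Mathlib

section
/- Let x, x', t, t' ∈ EuclideanSpace ℝ (Fin n) and let R, R' be linear isometry equivalences of EuclideanSpace ℝ (Fin n). Then R⁻¹(x − t) = R'⁻¹(x' − t') if and only if there exist a linear isometry equivalence Q of ℝⁿ and s ∈ ℝⁿ such that x' = Q x + s, t' = Q t + s, and R' = Q ∘ R. That is, the SE(n) attribute a(x, (t, R)) = R⁻¹(x − t) is a complete invariant of the simultaneous SE(n) action on coordinate–pose pairs. -/
/-- The SE(n) attribute `a(x, (t, R)) = R⁻¹ (x - t)` is a complete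
invariant of the simultaneous SE(n) action on coordinate–pose pairs. -/
theorem se_n_attribute_complete {n : ℕ} (x x' t t' : EuclideanSpace ℝ (Fin n))
    (R R' : EuclideanSpace ℝ (Fin n) ≃ₗᵢ[ℝ] EuclideanSpace ℝ (Fin n)) :
    R.symm (x - t) = R'.symm (x' - t') ↔
      ∃ (Q : EuclideanSpace ℝ (Fin n) ≃ₗᵢ[ℝ] EuclideanSpace ℝ (Fin n))
        (s : EuclideanSpace ℝ (Fin n)),
        x' = Q x + s ∧ t' = Q t + s ∧ R' = R.trans Q := by
  constructor
  · intro h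
    have h2 : R' (R.symm (x - t)) = x' - t' := by
      rw [h, LinearIsometryEquiv.apply_symm_apply]
    rw [map_sub, map_sub] at h2
    refine ⟨R.symm.trans R', t' - R' (R.symm t), ?_, ?_, ?_⟩
    · rw [LinearIsometryEquiv.trans_apply]
      have h3 : x' = (x' - t') + t' := by abel
      rw [h3, ← h2]
      abel
    · rw [LinearIsometryEquiv.trans_apply]
      abel
    · ext1 v
      simp
  · rintro ⟨Q, s, rfl, rfl, rfl⟩
    rw [add_sub_add_right_eq_sub, ← map_sub, LinearIsometryEquiv.eq_symm_apply]
    simp only [LinearIsometryEquiv.trans_apply, LinearIsometryEquiv.apply_symm_apply]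
end

section
/- Let G be a group acting on a measurable space X with measure μ such that each map x ↦ g • x is measurable and measure-preserving, acting also on a latent type Z, and let F : X → Z → E (E a real normed vector space) satisfy the steerability property F(g⁻¹ • x, z) = F(x, g • z). Define the loss L(f, z) := ∫⁻ ‖f(x) − F(x, z)‖₊² dμ(x). Then the set of loss minimizers is equivariant: for every measurable f : X → E, every g ∈ G, and every z ∈ Z, z minimizes L(f, ·) over Z (i.e. ∀ z', L(f, z) ≤ L(f, z')) if and only if g • z minimizes L(L_g f, ·) over Z, where (L_g f)(x) := f(g⁻¹ • x). -/
open MeasureTheory ENNReal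

/-- With a steerable field `F` and measure-preserving group action,
the set of minimizers of the reconstruction loss is equivariant:
`z` minimizes `L(f, ·)` iff `g • z` minimizes `L(L_g f, ·)`. -/
theorem loss_minimizers_equivariant {G X Z E : Type*} [Group G] [MulAction G X]
    [MeasurableSpace X] [MulAction G Z] [NormedAddCommGroup E] [MeasurableSpace E]
    (μ : Measure X)
    (hmp : ∀ g : G, MeasurePreserving (fun x : X => g • x) μ μ)
    (F : X → Z → E)
    (hsteer : ∀ (g : G) (x : X) (z : Z), F (g⁻¹ • x) z = F x (g • z))
    (f : X → E) (hf : Measurable f) (g : G) (z : Z) :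
    let L : (X → E) → Z → ℝ≥0∞ := fun f z => ∫⁻ x, (‖f x - F x z‖₊ : ℝ≥0∞) ^ 2 ∂μ
    let Lg : (X → E) → X → E := fun f x => f (g⁻¹ • x)
    (∀ z' : Z, L f z ≤ L f z') ↔ (∀ z' : Z, L (Lg f) (g • z) ≤ L (Lg f) z') := by
  intro L Lg
  let e : X ≃ᵐ X :=
    { toEquiv := MulAction.toPerm g⁻¹
      measurable_toFun := (hmp g⁻¹).measurable
      measurable_invFun := by
        have h := (hmp (g⁻¹)⁻¹).measurable
        exact h }
  have he : MeasurePreserving e μ μ := hmp g⁻¹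
  have key : ∀ w : Z, L (Lg f) (g • w) = L f w := by
    intro w
    have h := he.lintegral_map_equiv (fun x => (‖f x - F x w‖₊ : ℝ≥0∞) ^ 2) e
    change ∫⁻ x, (‖f (g⁻¹ • x) - F x (g • w)‖₊ : ℝ≥0∞) ^ 2 ∂μ
      = ∫⁻ x, (‖f x - F x w‖₊ : ℝ≥0∞) ^ 2 ∂μ
    rw [h]
    refine lintegral_congr fun x => ?_
    rw [← hsteer g x w]
    rfl
  constructor
  · intro h z'
    have h1 := key (g⁻¹ • z')
    rw [smul_inv_smul] at h1
    rw [key, h1]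
    exact h _
  · intro h z'
    rw [← key z, ← key z']
    exact h _
end

section
/- Let G be a group acting on a type X, let N ≥ 1, poses p : Fin N → G, contexts c : Fin N → C, and let S : X → (Fin N → G) → Finset (Fin N) be a selection rule (e.g. k-nearest-neighbour selection) that is nonempty-valued and bi-invariant: S(g • x, g • p) = S(x, p) for all g, x, p, where (g • p) i := g * (p i). With logits ℓ_i(x, p) = ⟪q((p i)⁻¹ • x), k(c i)⟫ + μ((p i)⁻¹ • x), define the truncated attention att_i(x, p) = exp(ℓ_i(x, p)) / Σ_{j ∈ S(x, p)} exp(ℓ_j(x, p)) for i ∈ S(x, p), and the truncated field f(x; p, c) = W_o(Σ_{i ∈ S(x, p)} att_i(x, p) • v((p i)⁻¹ • x, c i)), where q : X → EuclideanSpace ℝ (Fin d_k), k : C → EuclideanSpace ℝ (Fin d_k), μ : X → ℝ, v : X → C → F with F a real normed vector space, and W_o : F →ₗ[ℝ] V linear. Then the truncated field is steerable: for all g ∈ G and x ∈ X, f(g⁻¹ • x; p, c) = f(x; g • p, c). -/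
open RealInnerProductSpace

/-- A cross-attention field truncated by a nonempty-valued,
bi-invariant selection rule `S` (e.g. k-nearest-neighbour selection) is still
steerable: `f(g⁻¹ • x; p, c) = f(x; g • p, c)`. -/
theorem truncated_enf_steerable {G X C F V : Type*} [Group G] [MulAction G X]
    [NormedAddCommGroup F] [NormedSpace ℝ F] [AddCommGroup V] [Module ℝ V]
    {N dk : ℕ} (hN : 1 ≤ N)
    (p : Fin N → G) (c : Fin N → C)
    (S : X → (Fin N → G) → Finset (Fin N))
    (hS_nonempty : ∀ (x : X) (p : Fin N → G), (S x p).Nonempty)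
    (hS_biinv : ∀ (g : G) (x : X) (p : Fin N → G),
      S (g • x) (fun i => g * p i) = S x p)
    (q : X → EuclideanSpace ℝ (Fin dk)) (k : C → EuclideanSpace ℝ (Fin dk))
    (μ : X → ℝ) (v : X → C → F) (Wo : F →ₗ[ℝ] V) :
    let ℓ : X → (Fin N → G) → Fin N → ℝ := fun x p i =>
      ⟪q ((p i)⁻¹ • x), k (c i)⟫ + μ ((p i)⁻¹ • x)
    let att : X → (Fin N → G) → Fin N → ℝ := fun x p i =>
      Real.exp (ℓ x p i) / ∑ j ∈ S x p, Real.exp (ℓ x p j)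
    let f : X → (Fin N → G) → V := fun x p =>
      Wo (∑ i ∈ S x p, att x p i • v ((p i)⁻¹ • x) (c i))
    ∀ (g : G) (x : X), f (g⁻¹ • x) p = f x (fun i => g * p i) := by
  intro ℓ att f g x
  have hS : S x (fun i => g * p i) = S (g⁻¹ • x) p := by
    have h := hS_biinv g (g⁻¹ • x) p
    rwa [smul_inv_smul] at h
  have ha : ∀ i, (g * p i)⁻¹ • x = (p i)⁻¹ • g⁻¹ • x := fun i => by
    rw [mul_inv_rev, mul_smul]
  simp only [f, att, ℓ, hS, ha]
end
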